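/- The volume of the regular ideal tetrahedron, v_tet = 3Λ(π/3), satisfies |3Λ(π/3) − 1.014941| < 10⁻⁶. -/

import Mathlib

open Real MeasureTheory

/-- The Lobachevsky function `Λ(θ) = −∫₀^θ log |2 sin t| dt`. -/
noncomputable def lob (θ : ℝ) : ℝ := - ∫ t in (0:ℝ)..θ, Real.log |2 * Real.sin t|


noncomputable def tayS (n : ℕ) (x : ℝ) : ℝ :=
  ∑ k ∈ Finset.range n, (-1 : ℝ) ^ k * x ^ (2 * k + 1) / ((2 * k + 1).factorial : ℝ)
noncomputable def tayC (n : ℕ) (x : ℝ) : ℝ :=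
  ∑ k ∈ Finset.range n, (-1 : ℝ) ^ k * x ^ (2 * k) / ((2 * k).factorial : ℝ)

lemma tayS_deriv (n : ℕ) (x : ℝ) : HasDerivAt (tayS n) (tayC n x) x := by
  unfold tayS tayC
  apply HasDerivAt.fun_sum
  intro k _
  have h := ((hasDerivAt_pow (2 * k + 1) x).const_mul ((-1 : ℝ) ^ k)).div_const
    ((2 * k + 1).factorial : ℝ)
  refine h.congr_deriv ?_
  rw [Nat.factorial_succ]
  push_cast
  have : ((2 * k).factorial : ℝ) ≠ 0 := by positivity
  have h2 : (2 * (k : ℝ) + 1) ≠ 0 := by positivity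
  field_simp

lemma tayC_deriv (n : ℕ) (x : ℝ) : HasDerivAt (tayC (n + 1)) (-tayS n x) x := by
  unfold tayS tayC
  have e : (fun x : ℝ => ∑ k ∈ Finset.range (n + 1), (-1 : ℝ) ^ k * x ^ (2 * k) / ((2 * k).factorial : ℝ))
     = fun x : ℝ => (∑ k ∈ Finset.range n, (-1 : ℝ) ^ (k+1) * x ^ (2 * k + 2) / ((2 * k + 2).factorial : ℝ)) + 1 := by
    funext x
    rw [Finset.sum_range_succ']
    simp [mul_add]
  rw [e, ← Finset.sum_neg_distrib]
  apply HasDerivAt.add_const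
  apply HasDerivAt.fun_sum
  intro k _
  have h := ((hasDerivAt_pow (2 * k + 2) x).const_mul ((-1 : ℝ) ^ (k+1))).div_const
    ((2 * k + 2).factorial : ℝ)
  refine h.congr_deriv ?_
  rw [Nat.factorial_succ (2 * k + 1)]
  push_cast
  have : ((2 * k + 1).factorial : ℝ) ≠ 0 := by positivity
  have h2 : (2 * (k : ℝ) + 1 + 1) ≠ 0 := by positivity
  field_simp
  ring

lemma nonneg_of_deriv (f f' : ℝ → ℝ) (h0 : f 0 = 0) (hd : ∀ x, HasDerivAt f (f' x) x)
    (hp : ∀ x, 0 ≤ x → 0 ≤ f' x) (x : ℝ) (hx : 0 ≤ x) : 0 ≤ f x := by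
  have := monotoneOn_of_deriv_nonneg (convex_Ici (0:ℝ)) (f := f)
    (fun x _ => (hd x).continuousAt.continuousWithinAt)
    (fun x _ => (hd x).differentiableAt.differentiableWithinAt)
    (fun x hx => by rw [(hd x).deriv]; exact hp x (interior_subset hx))
  have := this (Set.mem_Ici.2 le_rfl) (Set.mem_Ici.2 hx) hx
  linarith

lemma tay_step (n : ℕ) (h : ∀ x, 0 ≤ x → 0 ≤ (-1 : ℝ) ^ n * (cos x - tayC n x)) :
    ∀ x, 0 ≤ x → 0 ≤ (-1 : ℝ) ^ n * (sin x - tayS n x) :=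
  nonneg_of_deriv _ _ (by simp [tayS]) 
    (fun x => ((hasDerivAt_sin x).sub (tayS_deriv n x)).const_mul _) h

lemma tay_cos (n : ℕ) : ∀ x, 0 ≤ x → 0 ≤ (-1 : ℝ) ^ (n+1) * (cos x - tayC (n+1) x) := by
  induction n with
  | zero => intro x _; simp [tayC, cos_le_one]
  | succ n ih =>
    refine nonneg_of_deriv _ _ ?_
      (fun x => ((hasDerivAt_cos x).sub (tayC_deriv (n+1) x)).const_mul _) ?_
    · simp [tayC, Finset.sum_range_succ']
    · intro x hx
      have := tay_step _ ih x hx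
      rw [pow_succ]; linarith

lemma tay_sin (n : ℕ) : ∀ x, 0 ≤ x → 0 ≤ (-1 : ℝ) ^ (n+1) * (sin x - tayS (n+1) x) :=
  tay_step _ (tay_cos n)

lemma key_up (t : ℝ) (h0 : 0 ≤ t) (h1 : t ≤ 1.05) :
    t * cos t ≤ sin t * (1 - (t^2/3 + t^4/45 + 2*t^6/945 + t^8/4725)) := by
  have hc := tay_cos 6 t h0
  have hs := tay_sin 5 t h0
  norm_num [tayC, tayS, Finset.sum_range_succ, Nat.factorial] at hc hs
  have hs2 : t ^ 2 ≤ 1.11 := by nlinarith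
  have hs0 : 0 ≤ t ^ 2 := by positivity
  have hq : 0 ≤ 1 - (t^2/3 + t^4/45 + 2*t^6/945 + t^8/4725) := by
    have e4 : t^4 ≤ 1.11^2 := by calc t^4 = (t^2)^2 := by ring
                             _ ≤ _ := by gcongr
    have e6 : t^6 ≤ 1.11^3 := by calc t^6 = (t^2)^3 := by ring
                             _ ≤ _ := by gcongr
    have e8 : t^8 ≤ 1.11^4 := by calc t^8 = (t^2)^4 := by ring
                             _ ≤ _ := by gcongr
    norm_num at *
    linarith
  have h2 := mul_le_mul_of_nonneg_right hs hq
  have h3 := mul_le_mul_of_nonneg_left hc h0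
  refine h3.trans (le_trans ?_ h2)
  rw [← sub_nonneg]
  have a1 : 0 ≤ t^11 * (1.11 - t^2) := mul_nonneg (by positivity) (by linarith)
  have a2 : 0 ≤ t^15 * (1.11 - t^2) := mul_nonneg (by positivity) (by linarith)
  have a3 : 0 ≤ t^11 := by positivity
  have a4 : 0 ≤ t^15 := by positivity
  have a5 : 0 ≤ t^19 := by positivity
  ring_nf at *
  linarith

lemma key_lo (t : ℝ) (h0 : 0 ≤ t) (h1 : t ≤ 1.05) :
    sin t * (1 - (t^2/3 + t^4/45 + 2*t^6/945 + t^8/4725 + t^10/39000)) ≤ t * cos t := by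
  have hc := tay_cos 7 t h0
  have hs := tay_sin 6 t h0
  norm_num [tayC, tayS, Finset.sum_range_succ, Nat.factorial] at hc hs
  have hs2 : t ^ 2 ≤ 1.11 := by nlinarith
  have hs0 : 0 ≤ t ^ 2 := by positivity
  have hq : 0 ≤ 1 - (t^2/3 + t^4/45 + 2*t^6/945 + t^8/4725 + t^10/39000) := by
    have e4 : t^4 ≤ 1.11^2 := by calc t^4 = (t^2)^2 := by ring
                             _ ≤ _ := by gcongr
    have e6 : t^6 ≤ 1.11^3 := by calc t^6 = (t^2)^3 := by ring
                             _ ≤ _ := by gcongr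
    have e8 : t^8 ≤ 1.11^4 := by calc t^8 = (t^2)^4 := by ring
                             _ ≤ _ := by gcongr
    have e10 : t^10 ≤ 1.11^5 := by calc t^10 = (t^2)^5 := by ring
                             _ ≤ _ := by gcongr
    norm_num at *
    linarith
  have h2 := mul_le_mul_of_nonneg_right hs hq
  have h3 := mul_le_mul_of_nonneg_left hc h0
  refine h2.trans (le_trans ?_ h3)
  rw [← sub_nonneg]
  have a1 : 0 ≤ t^11 * (1.11 - t^2) := mul_nonneg (by positivity) (by linarith)
  have a2 : 0 ≤ t^15 * (1.11 - t^2) := mul_nonneg (by positivity) (by linarith)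
  have a6 : 0 ≤ t^19 * (1.11 - t^2) := mul_nonneg (by positivity) (by linarith)
  have a3 : 0 ≤ t^11 := by positivity
  have a4 : 0 ≤ t^15 := by positivity
  have a5 : 0 ≤ t^19 := by positivity
  have a7 : 0 ≤ t^23 := by positivity
  ring_nf at *
  linarith

noncomputable def Qp (c t : ℝ) : ℝ := t^2/6 + t^4/180 + t^6/2835 + t^8/37800 + c * t^10
noncomputable def Qd (c t : ℝ) : ℝ := t/3 + t^3/45 + 2*t^5/945 + t^7/4725 + 10 * c * t^9

lemma Qp_deriv (c t : ℝ) : HasDerivAt (Qp c) (Qd c t) t := by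
  unfold Qp Qd
  have := (((((hasDerivAt_pow 2 t).div_const 6).add ((hasDerivAt_pow 4 t).div_const 180)).add
    ((hasDerivAt_pow 6 t).div_const 2835)).add ((hasDerivAt_pow 8 t).div_const 37800)).add
    ((hasDerivAt_pow 10 t).const_mul c)
  refine this.congr_deriv ?_
  push_cast
  ring

noncomputable def hh (c t : ℝ) : ℝ := log (sinc t) + Qp c t

lemma sin_pos' {t : ℝ} (h0 : 0 < t) (h1 : t ≤ 1.05) : 0 < sin t :=
  sin_pos_of_pos_of_lt_pi h0 (by linarith [pi_gt_three])

lemma sinc_pos' {t : ℝ} (h0 : 0 ≤ t) (h1 : t ≤ 1.05) : 0 < sinc t := by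
  rcases h0.eq_or_lt with rfl | h
  · simp
  · rw [sinc_of_ne_zero h.ne']
    exact div_pos (sin_pos' h h1) h

lemma hh_cont (c : ℝ) : ContinuousOn (hh c) (Set.Icc 0 1.05) := by
  unfold hh
  apply ContinuousOn.add
  · exact continuous_sinc.continuousOn.log (fun t ht => (sinc_pos' ht.1 ht.2).ne')
  · exact fun x _ => (Qp_deriv c x).continuousAt.continuousWithinAt

lemma hh_deriv (c t : ℝ) (h0 : 0 < t) (h1 : t ≤ 1.05) :
    HasDerivAt (hh c) ((t * cos t - sin t * (1 - t * Qd c t)) / (t * sin t)) t := by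
  have hs := sin_pos' h0 h1
  have h := (((hasDerivAt_sin t).log hs.ne').sub (hasDerivAt_log h0.ne')).add (Qp_deriv c t)
  refine (h.congr_deriv ?_).congr_of_eventuallyEq ?_
  · field_simp
    ring
  · filter_upwards [Ioo_mem_nhds h0 (show t < 3 by norm_num at h1; linarith)] with x hx
    have : 0 < sin x := sin_pos_of_pos_of_lt_pi hx.1 (hx.2.trans pi_gt_three)
    simp only [hh, Pi.add_apply, Pi.sub_apply]
    rw [sinc_of_ne_zero hx.1.ne', log_div this.ne' hx.1.ne']

lemma log_up (t : ℝ) (h0 : 0 < t) (h1 : t ≤ 1.05) : log (2 * sin t) ≤ log 2 + log t - Qp 0 t := by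
  have := antitoneOn_of_deriv_nonpos (convex_Icc (0:ℝ) 1.05) (hh_cont 0)
    (fun x hx => by
      rw [interior_Icc] at hx
      exact (hh_deriv 0 x hx.1 hx.2.le).differentiableAt.differentiableWithinAt)
    (fun x hx => by
      rw [interior_Icc] at hx
      rw [(hh_deriv 0 x hx.1 hx.2.le).deriv]
      have k := key_up x hx.1.le hx.2.le
      have := sin_pos' hx.1 hx.2.le
      apply div_nonpos_of_nonpos_of_nonneg
      · unfold Qd; ring_nf at *; linarith
      · exact (mul_pos hx.1 this).le)
  have := this ⟨le_rfl, by norm_num⟩ ⟨h0.le, h1⟩ h0.le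
  have hs := sin_pos' h0 h1
  simp only [hh] at this
  rw [sinc_of_ne_zero h0.ne', log_div hs.ne' h0.ne'] at this
  rw [log_mul two_ne_zero hs.ne']
  norm_num [Qp] at this ⊢
  linarith

lemma log_lo (t : ℝ) (h0 : 0 < t) (h1 : t ≤ 1.05) :
    log 2 + log t - Qp (1/390000) t ≤ log (2 * sin t) := by
  have := monotoneOn_of_deriv_nonneg (convex_Icc (0:ℝ) 1.05) (hh_cont (1/390000))
    (fun x hx => by
      rw [interior_Icc] at hx
      exact (hh_deriv _ x hx.1 hx.2.le).differentiableAt.differentiableWithinAt)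
    (fun x hx => by
      rw [interior_Icc] at hx
      rw [(hh_deriv _ x hx.1 hx.2.le).deriv]
      have k := key_lo x hx.1.le hx.2.le
      have := sin_pos' hx.1 hx.2.le
      apply div_nonneg
      · unfold Qd; ring_nf at *; linarith
      · exact (mul_pos hx.1 this).le)
  have := this ⟨le_rfl, by norm_num⟩ ⟨h0.le, h1⟩ h0.le
  have hs := sin_pos' h0 h1
  simp only [hh] at this
  rw [sinc_of_ne_zero h0.ne', log_div hs.ne' h0.ne'] at this
  rw [log_mul two_ne_zero hs.ne']
  norm_num [Qp] at this ⊢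
  linarith

lemma Qp_cont (c : ℝ) : Continuous (Qp c) := by unfold Qp; fun_prop

lemma bnd_int (c b : ℝ) : IntervalIntegrable (fun t => log 2 + log t - Qp c t) volume 0 b :=
  (intervalIntegrable_const.add intervalIntegral.intervalIntegrable_log').sub
    ((Qp_cont c).intervalIntegrable _ _)

lemma int_bnd (c b : ℝ) : ∫ t in (0:ℝ)..b, (log 2 + log t - Qp c t) =
    b * log 2 + (b * log b - b) - (b^3/18 + b^5/900 + b^7/19845 + b^9/340200 + c * b^11/11) := by
  rw [intervalIntegral.integral_sub (intervalIntegrable_const.add intervalIntegral.intervalIntegrable_log')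
    ((Qp_cont c).intervalIntegrable _ _), intervalIntegral.integral_add intervalIntegrable_const intervalIntegral.intervalIntegrable_log',
    integral_log]
  have : ∫ t in (0:ℝ)..b, Qp c t = b^3/18 + b^5/900 + b^7/19845 + b^9/340200 + c * b^11/11 := by
    have h : ∀ t, HasDerivAt (fun b : ℝ => b^3/18 + b^5/900 + b^7/19845 + b^9/340200 + c * b^11/11) (Qp c t) t := by
      intro t
      have := (((((hasDerivAt_pow 3 t).div_const 18).add ((hasDerivAt_pow 5 t).div_const 900)).add
        ((hasDerivAt_pow 7 t).div_const 19845)).add ((hasDerivAt_pow 9 t).div_const 340200)).add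
        (((hasDerivAt_pow 11 t).const_mul c).div_const 11)
      refine this.congr_deriv ?_
      unfold Qp
      push_cast
      ring
    rw [intervalIntegral.integral_eq_sub_of_hasDerivAt (fun x _ => h x) ((Qp_cont c).intervalIntegrable _ _)]
    simp
  rw [this]
  simp

lemma sin_int (b : ℝ) : IntervalIntegrable (fun t => log |2 * sin t|) volume 0 b := by
  have m : MeromorphicOn (fun t : ℝ => 2 * sin t) (Set.uIcc 0 b) := by
    intro x _
    exact AnalyticAt.meromorphicAt (by fun_prop)
  exact m.intervalIntegrable_log_norm

lemma log_bounds : 0.04611759715 ≤ log (Real.pi/3) ∧ log (Real.pi/3) ≤ 0.0461175978 := by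
  have p1 := pi_gt_d20
  have p2 := pi_lt_d20
  constructor
  · have h := sum_range_le_log_div (x := 0.02305471260) (by norm_num) (by norm_num) 4
    have h2 : log ((1 + 0.02305471260) / (1 - 0.02305471260)) ≤ log (Real.pi/3) := by
      apply log_le_log (by norm_num)
      norm_num at *
      linarith
    norm_num [Finset.sum_range_succ] at h h2 ⊢
    linarith
  · have h := log_div_le_sum_range_add (x := 0.02305471261) (by norm_num) (by norm_num) 4
    have h2 : log (Real.pi/3) ≤ log ((1 + 0.02305471261) / (1 - 0.02305471261)) := by
      apply log_le_log (by positivity)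
      norm_num at *
      linarith
    norm_num [Finset.sum_range_succ] at h h2 ⊢
    linarith

theorem vtet_approx : |3 * lob (Real.pi / 3) - 1.014941| < 1 / 1000000 := by
  obtain ⟨l1, l2⟩ := log_bounds
  have p1 := pi_gt_d20
  have p2 := pi_lt_d20
  have hb1 : 1.04719755119 ≤ Real.pi / 3 := by norm_num at *; linarith
  have hb2 : Real.pi / 3 ≤ 1.0471975512 := by norm_num at *; linarith
  have g1 := log_two_gt_d9
  have g2 := log_two_lt_d9
  unfold lob
  generalize Real.pi / 3 = b at *
  have hb0 : 0 ≤ b := le_trans (by norm_num) hb1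
  have hb3 : b ≤ 1.05 := hb2.trans (by norm_num)
  have up : ∫ t in (0:ℝ)..b, log |2 * sin t| ≤ ∫ t in (0:ℝ)..b, (log 2 + log t - Qp 0 t) := by
    apply intervalIntegral.integral_mono_on_of_le_Ioo hb0 (sin_int b) (bnd_int _ b)
    intro x hx
    rw [log_abs]
    exact log_up x hx.1 (hx.2.le.trans hb3)
  have lo : ∫ t in (0:ℝ)..b, (log 2 + log t - Qp (1/390000) t) ≤ ∫ t in (0:ℝ)..b, log |2 * sin t| := by
    apply intervalIntegral.integral_mono_on_of_le_Ioo hb0 (bnd_int _ b) (sin_int b)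
    intro x hx
    rw [log_abs]
    exact log_lo x hx.1 (hx.2.le.trans hb3)
  rw [int_bnd] at up lo
  have pl : ∀ n : ℕ, 1.04719755119 ^ n ≤ b ^ n := fun n => by gcongr
  have pu : ∀ n : ℕ, b ^ n ≤ 1.0471975512 ^ n := fun n => by gcongr
  have q3 := pl 3
  have q5 := pl 5
  have q7 := pl 7
  have q9 := pl 9
  have r3 := pu 3
  have r5 := pu 5
  have r7 := pu 7
  have r9 := pu 9
  have r11 := pu 11
  have s1 : 1.04719755119 * (1 - 0.6931471808 - 0.0461175978) ≤ b * (1 - log 2 - log b) := by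
    apply mul_le_mul hb1 _ (by norm_num) hb0
    linarith
  have s2 : b * (1 - log 2 - log b) ≤ 1.0471975512 * (1 - 0.6931471803 - 0.04611759715) := by
    apply mul_le_mul hb2 _ _ (by norm_num)
    · linarith
    · norm_num at *; linarith
  rw [abs_lt]
  generalize (∫ t in (0:ℝ)..b, log |2 * sin t|) = I at *
  norm_num at *
  constructor <;> linarith
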